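/- arXiv:1401.6039 — 2 statements merged into one kernel-verified Lean document; each statement's English description precedes it below -/
import Mathlib

section
/- Convexity in the auxiliary state: for every fixed positive semidefinite complex d×d matrix A and every fixed t ∈ [0,1], the function F ↦ −log Tr(A F^t), defined on the convex set of d×d density operators and taking values in (−∞,∞] with the convention −log 0 = +∞, is convex; equivalently, F ↦ Tr(A F^t) is concave on density operators. -/
open scoped BigOperators ComplexOrder
noncomputable section

namespace SPB

/-- `-log t` with the convention that it is `+∞` for `t ≤ 0`. -/
def negLog (t : ℝ) : EReal := if t ≤ 0 then (⊤ : EReal) else ((-Real.log t : ℝ) : EReal)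

/-- Power of a positive semidefinite (more generally Hermitian) matrix by functional calculus
on the eigenvalues, with the convention `0 ^ r = 0` (so `A ^ 0` is the projection onto the
range of `A`). -/
def mpow {ι : Type*} [Fintype ι] [DecidableEq ι] (A : Matrix ι ι ℂ) (r : ℝ) :
    Matrix ι ι ℂ :=
  if hA : A.IsHermitian then
    (hA.eigenvectorUnitary : Matrix ι ι ℂ) *
      Matrix.diagonal (fun i => ((if hA.eigenvalues i = 0 then (0 : ℝ)
        else hA.eigenvalues i ^ r : ℝ) : ℂ)) *
      (star (hA.eigenvectorUnitary : Matrix ι ι ℂ))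
  else 0

/-- A density operator: positive semidefinite with trace one. -/
def IsDensity {ι : Type*} [Fintype ι] [DecidableEq ι] (A : Matrix ι ι ℂ) : Prop :=
  A.PosSemidef ∧ A.trace = 1

/-!
For `0 < t` the matrix power `mpow F t` is the continuous functional calculus power `F ^ t`, which
is operator concave in `F`. For fixed `F` it is continuous in `t`, also at `t = 0` where it is the
range projection, and pointwise limits of concave maps are concave, so operator concavity persists
at `t = 0`. The functional `X ↦ Re Tr (A X)` is real linear and monotone for the Loewner order,
which turns operator concavity into concavity of `F ↦ Re Tr (A Fᵗ)`. Finally, `-log` is convex and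
antitone, so composing it with a concave function yields a convex one.
-/

section NegLog

lemma negLog_of_nonpos {x : ℝ} (hx : x ≤ 0) : negLog x = ⊤ := if_pos hx

lemma negLog_of_pos {x : ℝ} (hx : 0 < x) : negLog x = ((-Real.log x : ℝ) : EReal) :=
  if_neg hx.not_ge

lemma antitone_negLog : Antitone negLog := by
  intro x y hxy
  rcases le_or_gt x 0 with hx | hx
  · rw [negLog_of_nonpos hx]
    exact le_top
  · rw [negLog_of_pos hx, negLog_of_pos (hx.trans_le hxy), EReal.coe_le_coe_iff]
    exact neg_le_neg (Real.log_le_log hx hxy)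

lemma coe_mul_negLog_ne_bot {a : ℝ} (ha : 0 ≤ a) (x : ℝ) : (a : EReal) * negLog x ≠ ⊥ := by
  rcases ha.eq_or_lt with rfl | ha
  · simp
  rcases le_or_gt x 0 with hx | hx
  · simp [negLog_of_nonpos hx, EReal.coe_mul_top_of_pos ha]
  · rw [negLog_of_pos hx, ← EReal.coe_mul]
    exact EReal.coe_ne_bot _

lemma negLog_mul_add_mul_le_of_pos {a b x y : ℝ} (ha : 0 ≤ a) (hb : 0 ≤ b) (hab : a + b = 1)
    (hx : 0 < x) (hy : 0 < y) :
    negLog (a * x + b * y) ≤ (a : EReal) * negLog x + (b : EReal) * negLog y := by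
  have hpos : 0 < a * x + b * y := convex_Ioi (0 : ℝ) hx hy ha hb hab
  have hlog : a * Real.log x + b * Real.log y ≤ Real.log (a * x + b * y) :=
    strictConcaveOn_log_Ioi.concaveOn.2 hx hy ha hb hab
  rw [negLog_of_pos hpos, negLog_of_pos hx, negLog_of_pos hy, ← EReal.coe_mul, ← EReal.coe_mul,
    ← EReal.coe_add, EReal.coe_le_coe_iff]
  linarith

lemma negLog_mul_add_mul_le {a b : ℝ} (ha : 0 ≤ a) (hb : 0 ≤ b) (hab : a + b = 1) (x y : ℝ) :
    negLog (a * x + b * y) ≤ (a : EReal) * negLog x + (b : EReal) * negLog y := by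
  -- In `EReal`, `0 * ⊤ = 0`, so the infinite values only dominate when both weights are positive.
  rcases ha.eq_or_lt with rfl | ha_pos
  · obtain rfl : b = 1 := by simpa using hab
    simp
  rcases hb.eq_or_lt with rfl | hb_pos
  · obtain rfl : a = 1 := by simpa using hab
    simp
  rcases le_or_gt x 0 with hx | hx
  · rw [negLog_of_nonpos hx, EReal.coe_mul_top_of_pos ha_pos,
      EReal.top_add_of_ne_bot (coe_mul_negLog_ne_bot hb y)]
    exact le_top
  rcases le_or_gt y 0 with hy | hy
  · rw [negLog_of_nonpos hy, EReal.coe_mul_top_of_pos hb_pos,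
      EReal.add_top_of_ne_bot (coe_mul_negLog_ne_bot ha x)]
    exact le_top
  exact negLog_mul_add_mul_le_of_pos ha hb hab hx hy

end NegLog

section Matrix

open Filter Set
open scoped MatrixOrder Topology

variable {ι : Type*} [Fintype ι]

lemma trace_mul_nonneg {𝕜 : Type*} [RCLike 𝕜] {A B : Matrix ι ι 𝕜} (hA : A.PosSemidef)
    (hB : B.PosSemidef) : 0 ≤ (A * B).trace := by
  classical
  obtain ⟨C, rfl⟩ := CStarAlgebra.nonneg_iff_eq_star_mul_self.mp hA.nonneg
  rw [mul_assoc, Matrix.trace_mul_comm]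
  exact (hB.mul_mul_conjTranspose_same C).trace_nonneg

lemma monotone_trace_mul {𝕜 : Type*} [RCLike 𝕜] {A : Matrix ι ι 𝕜} (hA : A.PosSemidef) :
    Monotone fun X : Matrix ι ι 𝕜 => (A * X).trace := by
  intro X Y hXY
  rw [← sub_nonneg, ← Matrix.trace_sub, ← mul_sub]
  exact trace_mul_nonneg hA (Matrix.le_iff.mp hXY)

variable [DecidableEq ι]

lemma continuous_mpow (F : Matrix ι ι ℂ) : Continuous fun t : ℝ => mpow F t := by
  unfold mpow
  split_ifs with hF
  · refine (continuous_const.matrix_mul (Continuous.matrix_diagonal ?_)).matrix_mul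
      continuous_const
    refine continuous_pi fun i => Complex.continuous_ofReal.comp ?_
    split_ifs with hi
    · exact continuous_const
    · exact Real.continuous_const_rpow hi
  · exact continuous_const

open scoped Matrix.Norms.L2Operator

lemma mpow_eq_rpow {F : Matrix ι ι ℂ} (hF : F.PosSemidef) {t : ℝ} (ht : 0 < t) :
    mpow F t = F ^ t := by
  have zero_convention (x : ℝ) : (if x = 0 then 0 else x ^ t) = x ^ t := by
    split_ifs with hx
    · rw [hx, Real.zero_rpow ht.ne']
    · rfl
  rw [CFC.rpow_eq_cfc_real hF.nonneg, hF.1.cfc_eq, Matrix.IsHermitian.cfc,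
    Unitary.conjStarAlgAut_apply, mpow, dif_pos hF.1]
  simp only [zero_convention]
  rfl

lemma concaveOn_mpow_of_pos {t : ℝ} (ht₀ : 0 < t) (ht₁ : t ≤ 1) :
    ConcaveOn ℝ (Ici 0) fun F : Matrix ι ι ℂ => mpow F t :=
  (CFC.concaveOn_rpow ⟨ht₀.le, ht₁⟩).congr fun _ hF =>
    (mpow_eq_rpow (Matrix.nonneg_iff_posSemidef.mp hF) ht₀).symm

lemma concaveOn_mpow {t : ℝ} (ht₀ : 0 ≤ t) (ht₁ : t ≤ 1) :
    ConcaveOn ℝ (Ici 0) fun F : Matrix ι ι ℂ => mpow F t := by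
  rcases ht₀.eq_or_lt with rfl | ht_pos
  · have tendsto_zero : Tendsto (fun (s : ℝ) (F : Matrix ι ι ℂ) => mpow F s) (𝓝[>] 0)
        (𝓝 fun F => mpow F 0) :=
      tendsto_pi_nhds.mpr fun F => (continuous_mpow F).continuousWithinAt
    refine isClosed_setOfPred_concaveOn.mem_of_tendsto tendsto_zero ?_
    filter_upwards [Ioc_mem_nhdsGT one_pos] with s hs
    exact concaveOn_mpow_of_pos hs.1 hs.2
  · exact concaveOn_mpow_of_pos ht_pos ht₁

lemma concaveOn_re_trace_mul_mpow {A : Matrix ι ι ℂ} (hA : A.PosSemidef) {t : ℝ} (ht₀ : 0 ≤ t)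
    (ht₁ : t ≤ 1) : ConcaveOn ℝ (Ici 0) fun F : Matrix ι ι ℂ => (A * mpow F t).trace.re := by
  have operator_concave := concaveOn_mpow (ι := ι) ht₀ ht₁
  refine ⟨operator_concave.1, fun F₁ h₁ F₂ h₂ a b ha hb hab => ?_⟩
  calc a • (A * mpow F₁ t).trace.re + b • (A * mpow F₂ t).trace.re
      = (A * (a • mpow F₁ t + b • mpow F₂ t)).trace.re := by
        simp [mul_add, Matrix.trace_add, Matrix.trace_smul]
    _ ≤ (A * mpow (a • F₁ + b • F₂) t).trace.re :=
        (Complex.le_def.mp (monotone_trace_mul hA (operator_concave.2 h₁ h₂ ha hb hab))).1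

end Matrix

theorem negLog_trace_rpow_convex_general {ι : Type*} [Fintype ι] [DecidableEq ι]
    (A : Matrix ι ι ℂ) (hA : A.PosSemidef) (t : ℝ) (ht0 : 0 ≤ t) (ht1 : t ≤ 1) :
    (∀ F₁ F₂ : Matrix ι ι ℂ, F₁.PosSemidef → F₂.PosSemidef →
      ∀ p : ℝ, 0 ≤ p → p ≤ 1 →
        negLog ((Matrix.trace (A * mpow ((p : ℂ) • F₁ + ((1 - p : ℝ) : ℂ) • F₂) t)).re) ≤
          (p : EReal) * negLog ((Matrix.trace (A * mpow F₁ t)).re) +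
            ((1 - p : ℝ) : EReal) * negLog ((Matrix.trace (A * mpow F₂ t)).re)) ∧
    (∀ F₁ F₂ : Matrix ι ι ℂ, F₁.PosSemidef → F₂.PosSemidef →
      ∀ p : ℝ, 0 ≤ p → p ≤ 1 →
        p * (Matrix.trace (A * mpow F₁ t)).re + (1 - p) * (Matrix.trace (A * mpow F₂ t)).re ≤
          (Matrix.trace (A * mpow ((p : ℂ) • F₁ + ((1 - p : ℝ) : ℂ) • F₂) t)).re) := by
  simp only [Complex.coe_smul]
  have concave (F₁ F₂ : Matrix ι ι ℂ) (h₁ : F₁.PosSemidef) (h₂ : F₂.PosSemidef) (p : ℝ)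
      (hp0 : 0 ≤ p) (hp1 : p ≤ 1) :
      p * (A * mpow F₁ t).trace.re + (1 - p) * (A * mpow F₂ t).trace.re ≤
        (A * mpow (p • F₁ + (1 - p) • F₂) t).trace.re :=
    (concaveOn_re_trace_mul_mpow hA ht0 ht1).2 h₁.nonneg h₂.nonneg hp0 (sub_nonneg.mpr hp1)
      (add_sub_cancel p 1)
  exact ⟨fun F₁ F₂ h₁ h₂ p hp0 hp1 => (antitone_negLog (concave F₁ F₂ h₁ h₂ p hp0 hp1)).trans
    (negLog_mul_add_mul_le hp0 (sub_nonneg.mpr hp1) (add_sub_cancel p 1) _ _), concave⟩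

/-- **Convexity in the auxiliary state**: for `A` positive semidefinite and `t ∈ [0,1]`,
`F ↦ -log Tr(A Fᵗ)` is convex on the density operators (with values in `(-∞,∞]` and the
convention `-log 0 = +∞`); equivalently, `F ↦ Tr(A Fᵗ)` is concave on density operators. -/
theorem negLog_trace_rpow_convex {d : ℕ}
    (A : Matrix (Fin d) (Fin d) ℂ) (hA : A.PosSemidef)
    (t : ℝ) (ht0 : 0 ≤ t) (ht1 : t ≤ 1) :
    (∀ F₁ F₂ : Matrix (Fin d) (Fin d) ℂ, IsDensity F₁ → IsDensity F₂ →
      ∀ p : ℝ, 0 ≤ p → p ≤ 1 →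
        negLog ((Matrix.trace (A * mpow (((p : ℝ) : ℂ) • F₁ + (((1 - p : ℝ)) : ℂ) • F₂) t)).re) ≤
          ((p : ℝ) : EReal) * negLog ((Matrix.trace (A * mpow F₁ t)).re) +
            (((1 - p : ℝ)) : EReal) * negLog ((Matrix.trace (A * mpow F₂ t)).re)) ∧
    (∀ F₁ F₂ : Matrix (Fin d) (Fin d) ℂ, IsDensity F₁ → IsDensity F₂ →
      ∀ p : ℝ, 0 ≤ p → p ≤ 1 →
        p * (Matrix.trace (A * mpow F₁ t)).re + (1 - p) * (Matrix.trace (A * mpow F₂ t)).re ≤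
          (Matrix.trace (A * mpow (((p : ℝ) : ℂ) • F₁ + (((1 - p : ℝ)) : ℂ) • F₂) t)).re) := by
  obtain ⟨convex, concave⟩ := negLog_trace_rpow_convex_general A hA t ht0 ht1
  exact ⟨fun F₁ F₂ h₁ h₂ => convex F₁ F₂ h₁.1 h₂.1, fun F₁ F₂ h₁ h₂ => concave F₁ F₂ h₁.1 h₂.1⟩

end SPB
end
end

section
/- The smallest rate at which the constant-composition sphere packing exponent is finite: for every classical-quantum channel x ↦ S_x with finite input alphabet X and every probability distribution P on X, the limit as ρ → ∞ of E_0^cc(ρ,P)/ρ exists and equals R_∞(P) := min over density operators F on H of −Σ_{x∈X} P(x) log Tr(S_x^0 F), where S_x^0 denotes the orthogonal projection onto the range of S_x. -/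
open scoped BigOperators ComplexOrder
noncomputable section

namespace SPB

/-- A probability distribution on a finite alphabet. -/
def IsProbDist {X : Type*} [Fintype X] (P : X → ℝ) : Prop :=
  (∀ x, 0 ≤ P x) ∧ ∑ x, P x = 1

/-- The constant–composition sphere packing coefficient
`E₀^cc(ρ,P) = min_F -(1+ρ) ∑ₓ P(x) log Tr(Sₓ^{1/(1+ρ)} F^{ρ/(1+ρ)})`. -/
def E0cc {X : Type*} [Fintype X] {d : ℕ} (S : X → Matrix (Fin d) (Fin d) ℂ)
    (ρ : ℝ) (P : X → ℝ) : EReal :=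
  ⨅ F : {F : Matrix (Fin d) (Fin d) ℂ // IsDensity F},
    ((1 + ρ : ℝ) : EReal) *
      ∑ x, ((P x : ℝ) : EReal) *
        negLog ((Matrix.trace (mpow (S x) (1 / (1 + ρ)) * mpow F.1 (ρ / (1 + ρ)))).re)
/-- The cutoff rate `R_∞(P) = min_F -∑ₓ P(x) log Tr(Sₓ⁰ F)`, where `Sₓ⁰` is the orthogonal
projection onto the range of `Sₓ`. -/
def Rinf {X : Type*} [Fintype X] {d : ℕ} (S : X → Matrix (Fin d) (Fin d) ℂ)
    (P : X → ℝ) : EReal :=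
  ⨅ F : {F : Matrix (Fin d) (Fin d) ℂ // IsDensity F},
    ∑ x, ((P x : ℝ) : EReal) * negLog ((Matrix.trace (mpow (S x) 0 * F.1)).re)

/-!
Up to the factor `1 + ρ`, `E0cc S ρ P` is the infimum over `F` of
`∑ x, P x * -log Tr (S x ^ s * F ^ (1 - s))` at `s = 1 / (1 + ρ)`, and `Rinf S P` is the infimum of
the same expression at `s = 0`.

For a fixed `F` this expression is continuous in `s` with values in `EReal`, which bounds
`E0cc S ρ P / ρ` asymptotically from above by `Rinf S P`. In the other direction the infimum has to
be controlled uniformly in `F`: one replaces `F` by the state `F ^ (1 - s) / Tr (F ^ (1 - s))`.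
Since `Tr (F ^ (1 - s)) ≤ d ^ s` by the power mean inequality and `S x ^ s ≤ c ^ s • S x ^ 0` once
`c` bounds the spectrum of `S x`, this changes the expression by only `O(s)`.
-/

section EReal

variable {X : Type*}

lemma coe_mul_ne_bot {p : ℝ} (hp : 0 ≤ p) {a : EReal} (ha : a ≠ ⊥) : (p : EReal) * a ≠ ⊥ := by
  simp [EReal.mul_eq_bot, ha, hp.not_gt, EReal.coe_ne_bot, EReal.coe_ne_top]

lemma sum_ne_bot {s : Finset X} {f : X → EReal} (hf : ∀ x ∈ s, f x ≠ ⊥) : ∑ x ∈ s, f x ≠ ⊥ :=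
  Finset.sum_induction f (· ≠ ⊥) (fun _ _ ha hb ↦ by simp [EReal.add_eq_bot_iff, ha, hb])
    EReal.zero_ne_bot hf

lemma coe_ereal_sum (s : Finset X) (f : X → ℝ) :
    ((∑ x ∈ s, f x : ℝ) : EReal) = ∑ x ∈ s, (f x : EReal) :=
  map_sum (⟨⟨Real.toEReal, EReal.coe_zero⟩, EReal.coe_add⟩ : ℝ →+ EReal) f s

lemma continuous_sum_of_ne_bot {Y : Type*} [TopologicalSpace Y] {s : Finset X}
    {f : X → Y → EReal} (hf : ∀ x ∈ s, Continuous (f x)) (hbot : ∀ x ∈ s, ∀ y, f x y ≠ ⊥) :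
    Continuous fun y ↦ ∑ x ∈ s, f x y := by
  classical
  induction s using Finset.induction_on with
  | empty => simpa using continuous_const
  | insert a s ha ih =>
    rw [Finset.forall_mem_insert] at hf hbot
    simp only [Finset.sum_insert ha]
    refine continuous_iff_continuousAt.2 fun y ↦ ?_
    have hsum : ∑ x ∈ s, f x y ≠ ⊥ := sum_ne_bot fun x hx ↦ hbot.2 x hx y
    exact (EReal.continuousAt_add (.inr hsum) (.inl (hbot.1 y))).comp (f := fun y ↦ (f a y, _))
      (hf.1.continuousAt.prodMk (ih hf.2 hbot.2).continuousAt)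

end EReal

section NegLog

lemma negLog_eq_neg_log (t : ℝ) : negLog t = -ENNReal.log (ENNReal.ofReal t) := by
  rw [negLog, ENNReal.log_ofReal]
  split_ifs <;> simp

lemma continuous_negLog : Continuous negLog := by
  rw [funext negLog_eq_neg_log]
  exact continuous_neg.comp (ENNReal.continuous_log.comp ENNReal.continuous_ofReal)

lemma negLog_ne_bot (t : ℝ) : negLog t ≠ ⊥ := by
  unfold negLog
  split_ifs
  exacts [top_ne_bot, EReal.coe_ne_bot _]

lemma negLog_eq_negLog_mul_add_log {c : ℝ} (hc : 0 < c) (t : ℝ) :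
    negLog t = negLog (c * t) + (Real.log c : ℝ) := by
  rcases le_or_gt t 0 with ht | ht
  · rw [negLog, negLog, if_pos ht, if_pos (mul_nonpos_of_nonneg_of_nonpos hc.le ht),
      EReal.top_add_coe]
  · rw [negLog, negLog, if_neg ht.not_ge, if_neg (mul_pos hc ht).not_ge, ← EReal.coe_add,
      Real.log_mul hc.ne' ht.ne']
    congr 1
    ring

lemma negLog_le_negLog_add_log {c t u : ℝ} (hc : 0 < c) (h : t ≤ c * u) :
    negLog u ≤ negLog t + (Real.log c : ℝ) := by
  rw [negLog_eq_negLog_mul_add_log hc u]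
  exact add_le_add_left (antitone_negLog h) _

end NegLog

section ScalarPower

/-- The scalar function `l ↦ l ^ r` with value `0` at `l = 0` for every `r`, unlike `Real.rpow`,
for which `0 ^ 0 = 1`. It is the function that `mpow` applies to the eigenvalues. -/
def rpowOnSupport (r l : ℝ) : ℝ := if l = 0 then 0 else l ^ r

lemma rpowOnSupport_nonneg (r : ℝ) {l : ℝ} (hl : 0 ≤ l) : 0 ≤ rpowOnSupport r l := by
  unfold rpowOnSupport
  split_ifs
  exacts [le_rfl, Real.rpow_nonneg hl r]

lemma rpowOnSupport_one (l : ℝ) : rpowOnSupport 1 l = l := by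
  unfold rpowOnSupport
  split_ifs with hl <;> simp [hl]

lemma rpowOnSupport_of_ne_zero {r : ℝ} (hr : r ≠ 0) (l : ℝ) : rpowOnSupport r l = l ^ r := by
  unfold rpowOnSupport
  split_ifs with hl <;> simp [hl, hr]

lemma rpowOnSupport_le_rpow_mul {s c l : ℝ} (hs : 0 ≤ s) (hl : 0 ≤ l) (hlc : l ≤ c) :
    rpowOnSupport s l ≤ c ^ s * rpowOnSupport 0 l := by
  unfold rpowOnSupport
  split_ifs
  · simp
  · simpa using Real.rpow_le_rpow hl hlc hs

lemma continuous_rpowOnSupport (l : ℝ) : Continuous fun r ↦ rpowOnSupport r l := by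
  unfold rpowOnSupport
  split_ifs with hl
  exacts [continuous_const, Real.continuous_const_rpow hl]

lemma sum_rpow_one_sub_le {ι : Type*} [Fintype ι] {f : ι → ℝ} (hf : ∀ i, 0 ≤ f i)
    {s : ℝ} (hs₀ : 0 ≤ s) (hs₁ : s < 1) :
    ∑ i, f i ^ (1 - s) ≤ (Fintype.card ι : ℝ) ^ s * (∑ i, f i) ^ (1 - s) := by
  have hs : 0 < 1 - s := sub_pos.2 hs₁
  have hpow (i : ι) : 0 ≤ f i ^ (1 - s) := Real.rpow_nonneg (hf i) _
  have hsum : 0 ≤ ∑ i, f i ^ (1 - s) := Finset.sum_nonneg fun i _ ↦ hpow i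
  have hmean : (∑ i, f i ^ (1 - s)) ^ (1 - s)⁻¹ ≤
      (Fintype.card ι : ℝ) ^ ((1 - s)⁻¹ - 1) * ∑ i, f i := by
    simpa [Real.rpow_rpow_inv (hf _) hs.ne'] using
      Real.rpow_sum_le_const_mul_sum_rpow_of_nonneg Finset.univ
        ((one_le_inv₀ hs).2 (sub_le_self 1 hs₀)) fun i _ ↦ hpow i
  calc ∑ i, f i ^ (1 - s)
      = ((∑ i, f i ^ (1 - s)) ^ (1 - s)⁻¹) ^ (1 - s) := (Real.rpow_inv_rpow hsum hs.ne').symm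
    _ ≤ ((Fintype.card ι : ℝ) ^ ((1 - s)⁻¹ - 1) * ∑ i, f i) ^ (1 - s) := by gcongr
    _ = (Fintype.card ι : ℝ) ^ s * (∑ i, f i) ^ (1 - s) := by
      rw [Real.mul_rpow (by positivity) (Finset.sum_nonneg fun i _ ↦ hf i),
        ← Real.rpow_mul (by positivity), sub_mul, inv_mul_cancel₀ hs.ne', one_mul, sub_sub_cancel]

end ScalarPower

section TraceOrder

open scoped MatrixOrder

variable {ι : Type*} [Fintype ι] {A B C : Matrix ι ι ℂ}

lemma trace_mul_re_le_of_le (hAB : A ≤ B) (hC : C.PosSemidef) :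
    (A * C).trace.re ≤ (B * C).trace.re := by
  classical
  obtain ⟨D, rfl⟩ := CStarAlgebra.nonneg_iff_eq_star_mul_self.1 hC.nonneg
  have hconj : 0 ≤ (D * (B - A) * star D).trace :=
    ((Matrix.le_iff.1 hAB).mul_mul_conjTranspose_same D).trace_nonneg
  rw [← Matrix.trace_mul_cycle, mul_assoc, Matrix.sub_mul, Matrix.trace_sub, sub_nonneg] at hconj
  exact (Complex.le_def.1 hconj).1

lemma trace_mul_re_nonneg (hA : A.PosSemidef) (hB : B.PosSemidef) : 0 ≤ (A * B).trace.re := by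
  simpa using trace_mul_re_le_of_le hA.nonneg hB

end TraceOrder

section MatrixPower

open scoped MatrixOrder

variable {ι : Type*} [Fintype ι] [DecidableEq ι] {A : Matrix ι ι ℂ}

lemma continuousOn_spectrum (A : Matrix ι ι ℂ) (f : ℝ → ℝ) : ContinuousOn f (spectrum ℝ A) :=
  A.finite_real_spectrum.continuousOn f

lemma mpow_eq_conj (hA : A.IsHermitian) (r : ℝ) :
    mpow A r = (hA.eigenvectorUnitary : Matrix ι ι ℂ) *
      Matrix.diagonal (fun i ↦ (rpowOnSupport r (hA.eigenvalues i) : ℂ)) *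
      star (hA.eigenvectorUnitary : Matrix ι ι ℂ) :=
  dif_pos hA

lemma mpow_eq_cfc (hA : A.IsHermitian) (r : ℝ) : mpow A r = cfc (rpowOnSupport r) A := by
  rw [mpow_eq_conj hA, hA.cfc_eq, Matrix.IsHermitian.cfc, Unitary.conjStarAlgAut_apply]
  rfl

lemma mpow_one (hA : A.IsHermitian) : mpow A 1 = A := by
  rw [mpow_eq_cfc hA, funext rpowOnSupport_one]
  exact cfc_id' ℝ A hA

lemma posSemidef_mpow (hA : A.PosSemidef) (r : ℝ) : (mpow A r).PosSemidef := by
  rw [mpow_eq_cfc hA.1, ← Matrix.nonneg_iff_posSemidef]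
  exact cfc_nonneg fun l hl ↦ rpowOnSupport_nonneg r (spectrum_nonneg_of_nonneg hA.nonneg hl)

lemma mpow_le_smul_mpow_zero (hA : A.PosSemidef) {s c : ℝ} (hs : 0 ≤ s)
    (hc : ∀ l ∈ spectrum ℝ A, l ≤ c) : mpow A s ≤ c ^ s • mpow A 0 := by
  rw [mpow_eq_cfc hA.1, mpow_eq_cfc hA.1, ← cfc_smul (c ^ s) _ A (continuousOn_spectrum A _)]
  exact cfc_mono (fun l hl ↦
      rpowOnSupport_le_rpow_mul hs (spectrum_nonneg_of_nonneg hA.nonneg hl) (hc l hl))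
    (continuousOn_spectrum A _) (continuousOn_spectrum A _)

lemma continuous_mpow_s3 (A : Matrix ι ι ℂ) : Continuous (mpow A) := by
  by_cases hA : A.IsHermitian
  · rw [funext (mpow_eq_conj hA)]
    have hdiag : Continuous fun r ↦
        Matrix.diagonal fun i ↦ (rpowOnSupport r (hA.eigenvalues i) : ℂ) :=
      (continuous_pi fun i ↦
        Complex.continuous_ofReal.comp (continuous_rpowOnSupport _)).matrix_diagonal
    fun_prop
  · rw [show mpow A = fun _ ↦ 0 from funext fun _ ↦ dif_neg hA]
    exact continuous_const

lemma trace_mpow (hA : A.IsHermitian) (r : ℝ) :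
    (mpow A r).trace = (∑ i, rpowOnSupport r (hA.eigenvalues i) : ℝ) := by
  rw [mpow_eq_conj hA, Matrix.trace_mul_cycle, Unitary.coe_star_mul_self, one_mul,
    Matrix.trace_diagonal, Complex.ofReal_sum]

lemma sum_eigenvalues_eq_trace_re (hA : A.IsHermitian) : ∑ i, hA.eigenvalues i = A.trace.re := by
  simp [hA.trace_eq_sum_eigenvalues]

lemma le_trace_re_of_mem_spectrum (hA : A.PosSemidef) {l : ℝ} (hl : l ∈ spectrum ℝ A) :
    l ≤ A.trace.re := by
  rw [hA.1.spectrum_real_eq_range_eigenvalues] at hl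
  obtain ⟨i, rfl⟩ := hl
  rw [← sum_eigenvalues_eq_trace_re hA.1]
  exact Finset.single_le_sum (fun j _ ↦ hA.eigenvalues_nonneg j) (Finset.mem_univ i)

lemma trace_mpow_re_pos (hA : A.PosSemidef) (hA₀ : A ≠ 0) (r : ℝ) : 0 < (mpow A r).trace.re := by
  obtain ⟨i, hi⟩ : ∃ i, hA.1.eigenvalues i ≠ 0 :=
    Function.ne_iff.1 (hA.1.eigenvalues_eq_zero_iff.not.2 hA₀)
  rw [trace_mpow hA.1, Complex.ofReal_re]
  refine Finset.sum_pos' (fun j _ ↦ rpowOnSupport_nonneg r (hA.eigenvalues_nonneg j))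
    ⟨i, Finset.mem_univ i, ?_⟩
  rw [rpowOnSupport, if_neg hi]
  exact Real.rpow_pos_of_pos ((hA.eigenvalues_nonneg i).lt_of_ne' hi) r

lemma trace_mpow_one_sub_re_le (hA : A.PosSemidef) {s : ℝ} (hs₀ : 0 ≤ s) (hs₁ : s < 1) :
    (mpow A (1 - s)).trace.re ≤ (Fintype.card ι : ℝ) ^ s * A.trace.re ^ (1 - s) := by
  rw [trace_mpow hA.1, Complex.ofReal_re, ← sum_eigenvalues_eq_trace_re hA.1]
  simp only [rpowOnSupport_of_ne_zero (sub_pos.2 hs₁).ne']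
  exact sum_rpow_one_sub_le hA.eigenvalues_nonneg hs₀ hs₁

end MatrixPower

section TiltedState

variable {ι : Type*} [Fintype ι] [DecidableEq ι] {A F : Matrix ι ι ℂ} {s : ℝ}

lemma IsDensity.ne_zero (hF : IsDensity F) : F ≠ 0 := by
  rintro rfl
  simpa using hF.2

/-- The state `F ^ r / Tr (F ^ r)`. For `r = 1 - s` it is a competitor in `Rinf` that is nearly as
good as `F` is in `E0cc` with `s = 1 / (1 + ρ)`. -/
def tiltedState (F : Matrix ι ι ℂ) (r : ℝ) : Matrix ι ι ℂ :=
  (mpow F r).trace.re⁻¹ • mpow F r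

lemma isDensity_tiltedState (hF : F.PosSemidef) (hF₀ : F ≠ 0) (r : ℝ) :
    IsDensity (tiltedState F r) := by
  have hpos := trace_mpow_re_pos hF hF₀ r
  have htrace : (mpow F r).trace = ((mpow F r).trace.re : ℂ) := by
    rw [trace_mpow hF.1, Complex.ofReal_re]
  refine ⟨(posSemidef_mpow hF r).smul (inv_nonneg.2 hpos.le), ?_⟩
  rw [tiltedState, Matrix.trace_smul, Complex.real_smul, Complex.ofReal_inv, ← htrace]
  exact inv_mul_cancel₀ fun h ↦ hpos.ne' (by simp [h])

lemma trace_mul_mpow_re (hF : F.PosSemidef) (hF₀ : F ≠ 0) (r : ℝ) (B : Matrix ι ι ℂ) :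
    (B * mpow F r).trace.re = (mpow F r).trace.re * (B * tiltedState F r).trace.re := by
  rw [tiltedState, Matrix.mul_smul, Matrix.trace_smul, Complex.smul_re, smul_eq_mul,
    mul_inv_cancel_left₀ (trace_mpow_re_pos hF hF₀ r).ne']

lemma trace_mpow_mul_mpow_one_sub_re_le (hA : A.PosSemidef) {c : ℝ}
    (hc : ∀ l ∈ spectrum ℝ A, l ≤ c) (hc₀ : 0 ≤ c) (hF : IsDensity F) (hs₀ : 0 ≤ s) (hs₁ : s < 1) :
    (mpow A s * mpow F (1 - s)).trace.re ≤
      (c * Fintype.card ι) ^ s * (mpow A 0 * tiltedState F (1 - s)).trace.re := by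
  have hG : (tiltedState F (1 - s)).PosSemidef := (isDensity_tiltedState hF.1 hF.ne_zero _).1
  have hpow : (mpow A s * mpow F (1 - s)).trace.re ≤
      c ^ s * (mpow A 0 * mpow F (1 - s)).trace.re := by
    simpa using trace_mul_re_le_of_le (mpow_le_smul_mpow_zero hA hs₀ hc) (posSemidef_mpow hF.1 _)
  have htrace : (mpow F (1 - s)).trace.re ≤ (Fintype.card ι : ℝ) ^ s := by
    simpa [hF.2] using trace_mpow_one_sub_re_le hF.1 hs₀ hs₁
  have hnonneg := trace_mul_re_nonneg (posSemidef_mpow hA 0) hG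
  calc (mpow A s * mpow F (1 - s)).trace.re
      ≤ c ^ s * ((mpow F (1 - s)).trace.re * (mpow A 0 * tiltedState F (1 - s)).trace.re) :=
        hpow.trans_eq (by rw [trace_mul_mpow_re hF.1 hF.ne_zero])
    _ ≤ c ^ s * ((Fintype.card ι : ℝ) ^ s * (mpow A 0 * tiltedState F (1 - s)).trace.re) := by
      gcongr
    _ = (c * Fintype.card ι) ^ s * (mpow A 0 * tiltedState F (1 - s)).trace.re := by
      rw [Real.mul_rpow hc₀ (Nat.cast_nonneg _), mul_assoc]

end TiltedState

section MeanChernoff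

variable {X ι : Type*} [Fintype X] [Fintype ι] [DecidableEq ι] {S : X → Matrix ι ι ℂ} {P : X → ℝ}
  {F : Matrix ι ι ℂ}

/-- The `P`-average of the Chernoff quantities `-log Tr (S x ^ s * F ^ (1 - s))`. Its infimum over
`F` is `Rinf` at `s = 0` and, up to the factor `1 + ρ`, `E0cc` at `s = 1 / (1 + ρ)`. -/
def meanChernoff (S : X → Matrix ι ι ℂ) (P : X → ℝ) (s : ℝ) (F : Matrix ι ι ℂ) : EReal :=
  ∑ x, (P x : EReal) * negLog (mpow (S x) s * mpow F (1 - s)).trace.re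

/-- The rate at which `meanChernoff` may grow when `F` at `s` is replaced by `tiltedState F (1 - s)`
at `0`. The factor `Fintype.card ι` comes from normalizing `F ^ (1 - s)`, the trace of `S x` bounds
its spectrum, and the maximum with `1` keeps the logarithm away from its junk value at `0`. -/
def tiltingCost (S : X → Matrix ι ι ℂ) (P : X → ℝ) : ℝ :=
  ∑ x, P x * Real.log (max 1 (S x).trace.re * Fintype.card ι)

lemma continuous_meanChernoff (S : X → Matrix ι ι ℂ) (hP : ∀ x, 0 ≤ P x) (F : Matrix ι ι ℂ) :
    Continuous fun s ↦ meanChernoff S P s F := by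
  refine continuous_sum_of_ne_bot (fun x _ ↦ ?_) fun x _ s ↦ coe_mul_ne_bot (hP x) (negLog_ne_bot _)
  have htrace : Continuous fun s ↦ (mpow (S x) s * mpow F (1 - s)).trace.re :=
    Complex.continuous_re.comp (((continuous_mpow_s3 (S x)).mul
      ((continuous_mpow_s3 F).comp (continuous_const.sub continuous_id))).matrix_trace)
  exact continuous_iff_continuousAt.2 fun s ↦ EReal.Tendsto.const_mul
    (continuous_negLog.comp htrace).continuousAt
    (.inl (EReal.coe_ne_bot _)) (.inl (EReal.coe_ne_top _))

lemma meanChernoff_zero_tiltedState_le (hS : ∀ x, (S x).PosSemidef) (hP : ∀ x, 0 ≤ P x)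
    (hF : IsDensity F) {s : ℝ} (hs₀ : 0 ≤ s) (hs₁ : s < 1) :
    meanChernoff S P 0 (tiltedState F (1 - s)) ≤
      meanChernoff S P s F + (s * tiltingCost S P : ℝ) := by
  have hG := isDensity_tiltedState hF.1 hF.ne_zero (1 - s)
  have hι : Nonempty ι := not_isEmpty_iff.1 fun _ ↦ hF.ne_zero (Subsingleton.elim _ _)
  have hbase (x : X) : 0 < max 1 (S x).trace.re * (Fintype.card ι : ℝ) := by positivity
  rw [meanChernoff, meanChernoff, tiltingCost, sub_zero, mpow_one hG.1.1, Finset.mul_sum,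
    coe_ereal_sum, ← Finset.sum_add_distrib]
  refine Finset.sum_le_sum fun x _ ↦ ?_
  have hterm := negLog_le_negLog_add_log (Real.rpow_pos_of_pos (hbase x) s)
    (trace_mpow_mul_mpow_one_sub_re_le (hS x)
      (fun l hl ↦ (le_trace_re_of_mem_spectrum (hS x) hl).trans (le_max_right 1 _))
      (by positivity) hF hs₀ hs₁)
  have hPx : (0 : EReal) ≤ P x := EReal.coe_nonneg.2 (hP x)
  refine (mul_le_mul_of_nonneg_left hterm hPx).trans_eq ?_
  rw [EReal.left_distrib_of_nonneg_of_ne_top hPx (EReal.coe_ne_top _), ← EReal.coe_mul,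
    Real.log_rpow (hbase x), mul_left_comm]

end MeanChernoff

section InfimumBounds

variable {X : Type*} [Fintype X] {P : X → ℝ} {d : ℕ} {S : X → Matrix (Fin d) (Fin d) ℂ}

lemma Rinf_eq_iInf_meanChernoff (S : X → Matrix (Fin d) (Fin d) ℂ) (P : X → ℝ) :
    Rinf S P = ⨅ F : {F : Matrix (Fin d) (Fin d) ℂ // IsDensity F}, meanChernoff S P 0 F := by
  refine iInf_congr fun F ↦ ?_
  rw [meanChernoff, sub_zero, mpow_one F.2.1.1]

lemma E0cc_eq_iInf_meanChernoff (S : X → Matrix (Fin d) (Fin d) ℂ) (P : X → ℝ) {ρ : ℝ}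
    (hρ : 1 + ρ ≠ 0) :
    E0cc S ρ P = ⨅ F : {F : Matrix (Fin d) (Fin d) ℂ // IsDensity F},
      ((1 + ρ : ℝ) : EReal) * meanChernoff S P (1 + ρ)⁻¹ F := by
  have hexp : ρ / (1 + ρ) = 1 - (1 + ρ)⁻¹ := by field_simp; ring
  simp only [E0cc, meanChernoff, hexp, one_div]

lemma Rinf_le_meanChernoff_add (hS : ∀ x, (S x).PosSemidef) (hP : ∀ x, 0 ≤ P x)
    {F : Matrix (Fin d) (Fin d) ℂ} (hF : IsDensity F) {s : ℝ} (hs₀ : 0 ≤ s) (hs₁ : s < 1) :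
    Rinf S P ≤ meanChernoff S P s F + (s * tiltingCost S P : ℝ) := by
  have hG := isDensity_tiltedState hF.1 hF.ne_zero (1 - s)
  rw [Rinf_eq_iInf_meanChernoff]
  exact (iInf_le _ (⟨_, hG⟩ : {F // IsDensity F})).trans
    (meanChernoff_zero_tiltedState_le hS hP hF hs₀ hs₁)

lemma mul_Rinf_sub_le_E0cc (hS : ∀ x, (S x).PosSemidef) (hP : ∀ x, 0 ≤ P x) {ρ : ℝ} (hρ : 0 < ρ) :
    ((1 + ρ : ℝ) : EReal) * (Rinf S P - ((1 + ρ)⁻¹ * tiltingCost S P : ℝ)) ≤ E0cc S ρ P := by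
  have h1ρ : 0 < 1 + ρ := by positivity
  rw [E0cc_eq_iInf_meanChernoff S P h1ρ.ne']
  refine le_iInf fun F ↦ mul_le_mul_of_nonneg_left ?_ (EReal.coe_nonneg.2 h1ρ.le)
  exact EReal.sub_le_of_le_add <| Rinf_le_meanChernoff_add hS hP F.2 (inv_nonneg.2 h1ρ.le)
    (inv_lt_one_of_one_lt₀ (by linarith))

end InfimumBounds

section Limit

open Filter Topology

lemma tendsto_inv_one_add_atTop : Tendsto (fun ρ : ℝ ↦ (1 + ρ)⁻¹) atTop (𝓝 0) :=
  tendsto_inv_atTop_zero.comp (tendsto_atTop_add_const_left _ 1 tendsto_id)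

lemma tendsto_inv_mul_one_add_mul {f : ℝ → EReal} {a : EReal} (hf : Tendsto f atTop (𝓝 a)) :
    Tendsto (fun ρ : ℝ ↦ ((ρ⁻¹ : ℝ) : EReal) * (((1 + ρ : ℝ) : EReal) * f ρ)) atTop (𝓝 a) := by
  have hratio : Tendsto (fun ρ : ℝ ↦ ρ⁻¹ * (1 + ρ)) atTop (𝓝 1) := by
    have hadd : Tendsto (fun ρ : ℝ ↦ ρ⁻¹ + 1) atTop (𝓝 1) := by
      simpa using tendsto_inv_atTop_zero.add_const (1 : ℝ)
    refine hadd.congr' ?_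
    filter_upwards [eventually_ne_atTop 0] with ρ hρ
    rw [mul_add, mul_one, inv_mul_cancel₀ hρ]
  have hmul := EReal.Tendsto.mul ((continuous_coe_real_ereal.tendsto 1).comp hratio) hf
    (.inl one_ne_zero) (.inl one_ne_zero) (.inl (EReal.coe_ne_bot 1)) (.inl (EReal.coe_ne_top 1))
  simpa [mul_assoc] using hmul

lemma tendsto_const_sub_coe {α : Type*} {l : Filter α} (a : EReal) {f : α → ℝ} {b : ℝ}
    (hf : Tendsto f l (𝓝 b)) : Tendsto (fun y ↦ a - (f y : EReal)) l (𝓝 (a - b)) := by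
  have hneg : Tendsto (fun y ↦ -(f y : EReal)) l (𝓝 (-b)) :=
    (continuous_neg.tendsto _).comp ((continuous_coe_real_ereal.tendsto b).comp hf)
  exact (EReal.continuousAt_add (p := (a, -b)) (.inr (by simp)) (.inr (by simp))).tendsto.comp
    (tendsto_const_nhds.prodMk_nhds hneg)

theorem tendsto_E0cc_div_rho_general {X : Type*} [Fintype X] {d : ℕ}
    (S : X → Matrix (Fin d) (Fin d) ℂ) (hS : ∀ x, (S x).PosSemidef)
    (P : X → ℝ) (hP : ∀ x, 0 ≤ P x) :
    Tendsto (fun ρ : ℝ ↦ ((ρ⁻¹ : ℝ) : EReal) * E0cc S ρ P) atTop (𝓝 (Rinf S P)) := by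
  have hinv {ρ : ℝ} (hρ : 0 < ρ) : (0 : EReal) ≤ (ρ⁻¹ : ℝ) := EReal.coe_nonneg.2 (inv_pos.2 hρ).le
  refine tendsto_order.2 ⟨fun a ha ↦ ?_, fun b hb ↦ ?_⟩
  · have hlower := tendsto_inv_mul_one_add_mul <| tendsto_const_sub_coe (Rinf S P) <|
      tendsto_inv_one_add_atTop.mul_const (tiltingCost S P)
    rw [zero_mul, EReal.coe_zero, sub_zero] at hlower
    filter_upwards [hlower.eventually_const_lt ha, eventually_gt_atTop 0] with ρ haρ hρ
    exact haρ.trans_le (mul_le_mul_of_nonneg_left (mul_Rinf_sub_le_E0cc hS hP hρ) (hinv hρ))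
  · rw [Rinf_eq_iInf_meanChernoff] at hb
    obtain ⟨F, hF⟩ := iInf_lt_iff.1 hb
    have hupper := tendsto_inv_mul_one_add_mul <|
      ((continuous_meanChernoff S hP F).tendsto 0).comp tendsto_inv_one_add_atTop
    filter_upwards [hupper.eventually_lt_const hF, eventually_gt_atTop 0] with ρ hbρ hρ
    refine (mul_le_mul_of_nonneg_left ?_ (hinv hρ)).trans_lt hbρ
    rw [E0cc_eq_iInf_meanChernoff S P (by positivity)]
    exact iInf_le _ F

end Limit

/-- **The smallest rate at which the constant-composition sphere packing exponent is
finite**: `E₀^cc(ρ,P)/ρ → R_∞(P)` as `ρ → ∞`. -/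
theorem tendsto_E0cc_div_rho
    {X : Type*} [Fintype X] [DecidableEq X] {d : ℕ}
    (S : X → Matrix (Fin d) (Fin d) ℂ) (hS : ∀ x, IsDensity (S x))
    (P : X → ℝ) (hP : IsProbDist P) :
    Filter.Tendsto (fun ρ : ℝ => ((ρ⁻¹ : ℝ) : EReal) * E0cc S ρ P)
      Filter.atTop (nhds (Rinf S P)) :=
  tendsto_E0cc_div_rho_general S (fun x ↦ (hS x).1) P hP.1

end SPB
end
end
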